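/- Let d ≥ 2 and 0 < s < d be integers, and let Γ = {a, h, t, x} be a four-element set. Let W₁ be the set of multisets of size d over Γ that contain at least one x, or at least s+1 copies of h, or at least d−s+1 copies of t. Call a d-tuple (S₁,…,S_d) of nonempty subsets of Γ closed if for every choice x₁ ∈ S₁, …, x_d ∈ S_d the multiset {x₁,…,x_d} belongs to W₁; order such tuples by (S₁,…,S_d) ≤ (S′₁,…,S′_d) iff there is a permutation π with S_i ⊆ S′_{π(i)} for all i. Then the maximal closed tuples are exactly, up to permutation of coordinates: ({x}, Γ, …, Γ) (one coordinate {x} and d−1 coordinates Γ); ({h,x} repeated s+1 times and Γ repeated d−s−1 times); and ({t,x} repeated d−s+1 times and Γ repeated s−1 times). -/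

import Mathlib

/-- The four-letter alphabet `Γ = {a, h, t, x}`. -/
inductive Gam : Type
  | a | h | t | x
deriving DecidableEq

instance : Fintype Gam :=
  ⟨{Gam.a, Gam.h, Gam.t, Gam.x}, by intro y; cases y <;> simp⟩

/-- The multiset of values of a tuple. -/
def tupleMultiset {n : ℕ} (f : Fin n → Gam) : Multiset Gam :=
  (Finset.univ : Finset (Fin n)).val.map f

/-- Membership in the white constraint `W₁`: the multiset contains at least one `x`, or at
least `s+1` copies of `h`, or at least `d-s+1` copies of `t`. -/
def InW1 (d s : ℕ) (m : Multiset Gam) : Prop :=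
  Gam.x ∈ m ∨ s + 1 ≤ m.count Gam.h ∨ d - s + 1 ≤ m.count Gam.t

/-- A tuple of subsets of `Γ` is closed if every choice from the sets gives a multiset
in `W₁`. -/
def ClosedW1 (d s : ℕ) {n : ℕ} (S : Fin n → Set Gam) : Prop :=
  ∀ f : Fin n → Gam, (∀ i, f i ∈ S i) → InW1 d s (tupleMultiset f)

/-- `S ≤ S'` iff there is a permutation `π` with `S i ⊆ S' (π i)` for all `i`. -/
def TupLE {n : ℕ} (S S' : Fin n → Set Gam) : Prop :=
  ∃ π : Equiv.Perm (Fin n), ∀ i, S i ⊆ S' (π i)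

/-- Two tuples are equal up to a permutation of coordinates. -/
def PermEq {n : ℕ} (S S' : Fin n → Set Gam) : Prop :=
  ∃ π : Equiv.Perm (Fin n), ∀ i, S i = S' (π i)

/-!
A tuple lies below `(U, …, U, Γ, …, Γ)`, with `k` copies of `U`, exactly when at least `k` of its
coordinates are contained in `U`. A tuple is closed exactly when some coordinate is contained in
`{x}`, or at least `s + 1` are contained in `{h, x}`, or at least `d - s + 1` in `{t, x}`: if all
three fail, there is a set `M` of `s` coordinates containing all those inside `{h, x}` and none of
those inside `{t, x}`, and choosing neither `t` nor `x` on `M` and neither `h` nor `x` off `M` gives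
a multiset outside `W₁`. So the closed tuples are those below one of three block tuples, and these
three are pairwise incomparable.
-/

open Finset

section Relation

variable {α : Type*} {r : α → α → Prop} [IsPreorder α r] {P : α → Prop} {B : Set α}

lemma maximal_iff_exists_antisymmRel (hB : IsAntichain r B) (hP : ∀ a, P a ↔ ∃ b ∈ B, r a b)
    (a : α) :
    (P a ∧ ∀ a', P a' → r a a' → r a' a) ↔ ∃ b ∈ B, AntisymmRel r a b := by
  constructor
  · rintro ⟨ha, hmax⟩
    obtain ⟨b, hb, hab⟩ := (hP a).1 ha
    exact ⟨b, hb, hab, hmax b ((hP b).2 ⟨b, hb, refl b⟩) hab⟩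
  · rintro ⟨b, hb, hab, hba⟩
    refine ⟨(hP a).2 ⟨b, hb, hab⟩, fun a' ha' haa' => ?_⟩
    obtain ⟨b', hb', hab'⟩ := (hP a').1 ha'
    obtain rfl : b = b' := hB.eq hb hb' (_root_.trans hba (_root_.trans haa' hab'))
    exact _root_.trans hab' hba

end Relation

section Tuples

variable {n k l : ℕ} {S T : Fin n → Set Gam} {U V : Set Gam}

instance : IsPreorder (Fin n → Set Gam) TupLE where
  refl _ := ⟨1, fun _ => subset_rfl⟩
  trans _ _ _ := fun ⟨π, hπ⟩ ⟨σ, hσ⟩ => ⟨π.trans σ, fun i => (hπ i).trans (hσ (π i))⟩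

lemma TupLE.nonempty (h : TupLE S T) (hS : ∀ i, (S i).Nonempty) (i : Fin n) :
    (T i).Nonempty := by
  obtain ⟨π, hπ⟩ := h
  simpa using (hS (π.symm i)).mono (hπ (π.symm i))

-- The total size of the coordinates is monotone, so it is the same for `S` and `T`, and every
-- inclusion `S i ⊆ T (π i)` is an equality.
lemma TupLE.permEq (hST : TupLE S T) (hTS : TupLE T S) : PermEq S T := by
  obtain ⟨π, hπ⟩ := hST
  obtain ⟨σ, hσ⟩ := hTS
  have card_le : ∀ i ∈ univ, (S i).ncard ≤ (T (π i)).ncard :=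
    fun i _ => Set.ncard_le_ncard (hπ i)
  have sum_eq : ∑ i, (S i).ncard = ∑ i, (T (π i)).ncard := by
    refine (sum_le_sum card_le).antisymm ?_
    calc ∑ i, (T (π i)).ncard = ∑ i, (T i).ncard := Equiv.sum_comp π fun i => (T i).ncard
      _ ≤ ∑ i, (S (σ i)).ncard := sum_le_sum fun i _ => Set.ncard_le_ncard (hσ i)
      _ = ∑ i, (S i).ncard := Equiv.sum_comp σ fun i => (S i).ncard
  have card_eq := (sum_eq_sum_iff_of_le card_le).1 sum_eq
  exact ⟨π, fun i => Set.eq_of_subset_of_ncard_le (hπ i) (card_eq i (mem_univ i)).ge⟩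

lemma antisymmRel_tupLE_iff_permEq : AntisymmRel TupLE S T ↔ PermEq S T := by
  refine ⟨fun h => h.1.permEq h.2, fun ⟨π, hπ⟩ => ⟨⟨π, fun i => (hπ i).subset⟩, ⟨π.symm, ?_⟩⟩⟩
  intro i
  simp [hπ]

open scoped Classical in
/-- The coordinates at which the tuple `S` is contained in `U`. Their number decides both the
comparison of `S` with block tuples and whether `S` is closed. -/
noncomputable def coordsIn (S : Fin n → Set Gam) (U : Set Gam) : Finset (Fin n) :=
  {i | S i ⊆ U}

@[simp]
lemma mem_coordsIn {i : Fin n} : i ∈ coordsIn S U ↔ S i ⊆ U := by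
  simp [coordsIn]

/-- The block tuple `(U, …, U, Γ, …, Γ)` of length `n` with `k` leading copies of `U`. -/
def block (n k : ℕ) (U : Set Gam) : Fin n → Set Gam :=
  fun i => if (i : ℕ) < k then U else Set.univ

lemma block_one (hn : 0 < n) :
    block n 1 U = fun i => if i = (⟨0, hn⟩ : Fin n) then U else Set.univ := by
  funext i
  simp [block, Fin.ext_iff]

lemma card_filter_val_lt_of_le (hk : k ≤ n) : #{i : Fin n | (i : ℕ) < k} = k := by
  rw [Fin.card_filter_val_lt, min_eq_right hk]

lemma tupLE_block_iff (hk : k ≤ n) : TupLE S (block n k U) ↔ k ≤ #(coordsIn S U) := by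
  constructor
  · rintro ⟨π, hπ⟩
    rw [← card_filter_val_lt_of_le hk]
    refine card_le_card_of_injOn π.symm (fun i hi => ?_) π.symm.injective.injOn
    have hik : (i : ℕ) < k := by simpa using hi
    simpa [block, hik] using hπ (π.symm i)
  · intro h
    obtain ⟨M, hM, hMk⟩ := exists_subset_card_eq h
    have e : {j : Fin n // (j : ℕ) < k} ≃ {i : Fin n // i ∈ M} := by
      apply Fintype.equivOfCardEq
      rw [Fintype.card_subtype, card_filter_val_lt_of_le hk, Fintype.card_coe, hMk]
    refine ⟨e.extendSubtype.symm, fun i => ?_⟩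
    by_cases hi : (e.extendSubtype.symm i : ℕ) < k
    · have hiM : i ∈ M := by simpa using e.extendSubtype_mem _ hi
      simpa only [block, if_pos hi] using mem_coordsIn.1 (hM hiM)
    · simp [block, hi]

lemma block_tupLE_block_iff (hk₀ : 0 < k) (hk : k ≤ n) (hl : l ≤ n) (hV : V ≠ Set.univ) :
    TupLE (block n l U) (block n k V) ↔ U ⊆ V ∧ k ≤ l := by
  have block_subset_iff (i : Fin n) : block n l U i ⊆ V ↔ (i : ℕ) < l ∧ U ⊆ V := by
    by_cases hi : (i : ℕ) < l <;> simp [block, hi, Set.univ_subset_iff, hV]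
  rw [tupLE_block_iff hk]
  by_cases hUV : U ⊆ V
  · have coordsIn_eq : coordsIn (block n l U) V = ({i | (i : ℕ) < l} : Finset (Fin n)) := by
      ext i
      simp [block_subset_iff, hUV]
    simp [coordsIn_eq, card_filter_val_lt_of_le hl, hUV]
  · have coordsIn_eq : coordsIn (block n l U) V = ∅ := by
      ext i
      simp [block_subset_iff, hUV]
    simp [coordsIn_eq, hUV, hk₀.ne']

end Tuples

section Closed

variable {n d s : ℕ}

lemma count_tupleMultiset (f : Fin n → Gam) (c : Gam) :
    (tupleMultiset f).count c = #{i | f i = c} := by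
  rw [tupleMultiset, Multiset.count_map]
  simp only [Finset.card, Finset.filter_val, eq_comm]

lemma mem_tupleMultiset {f : Fin n → Gam} {c : Gam} : c ∈ tupleMultiset f ↔ ∃ i, f i = c := by
  simp [tupleMultiset]

lemma card_coordsIn_le_count {S : Fin n → Set Gam} {f : Fin n → Gam} (hf : ∀ i, f i ∈ S i)
    (hx : Gam.x ∉ tupleMultiset f) (c : Gam) :
    #(coordsIn S {c, Gam.x}) ≤ (tupleMultiset f).count c := by
  rw [count_tupleMultiset]
  refine card_le_card fun i hi => mem_filter.2 ⟨mem_univ i, ?_⟩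
  exact (mem_coordsIn.1 hi (hf i)).resolve_right fun h => hx (mem_tupleMultiset.2 ⟨i, h⟩)

lemma closedW1_of_card_coordsIn {S : Fin n → Set Gam}
    (h : 1 ≤ #(coordsIn S {Gam.x}) ∨ s + 1 ≤ #(coordsIn S {Gam.h, Gam.x}) ∨
      d - s + 1 ≤ #(coordsIn S {Gam.t, Gam.x})) :
    ClosedW1 d s S := by
  intro f hf
  refine or_iff_not_imp_left.2 fun hx => ?_
  rcases h with h | h | h
  · obtain ⟨i, hi⟩ := card_pos.1 h
    exact absurd (mem_tupleMultiset.2 ⟨i, mem_coordsIn.1 hi (hf i)⟩) hx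
  · exact .inl (h.trans (card_coordsIn_le_count hf hx _))
  · exact .inr (h.trans (card_coordsIn_le_count hf hx _))

lemma exists_choice_of_not_subset {S : Fin n → Set Gam} {M : Finset (Fin n)}
    (hM : ∀ i ∈ M, ¬ S i ⊆ {Gam.t, Gam.x}) (hMc : ∀ i ∉ M, ¬ S i ⊆ {Gam.h, Gam.x}) :
    ∃ f : Fin n → Gam, (∀ i, f i ∈ S i) ∧ Gam.x ∉ tupleMultiset f ∧
      (tupleMultiset f).count Gam.h ≤ #M ∧ (tupleMultiset f).count Gam.t ≤ #Mᶜ := by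
  have pointwise (i : Fin n) :
      ∃ y ∈ S i, y ≠ Gam.x ∧ (y = Gam.h → i ∈ M) ∧ (y = Gam.t → i ∈ Mᶜ) := by
    by_cases hi : i ∈ M
    · obtain ⟨y, hy, hyt⟩ := Set.not_subset.1 (hM i hi)
      exact ⟨y, hy, by simp_all⟩
    · obtain ⟨y, hy, hyh⟩ := Set.not_subset.1 (hMc i hi)
      exact ⟨y, hy, by simp_all⟩
  choose f hfS hfx hfh hft using pointwise
  simp only [count_tupleMultiset, mem_tupleMultiset, not_exists]
  exact ⟨f, hfS, hfx, card_le_card fun i hi => hfh i (mem_filter.1 hi).2,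
    card_le_card fun i hi => hft i (mem_filter.1 hi).2⟩

lemma ClosedW1.card_coordsIn (hsd : s ≤ d) {S : Fin d → Set Gam} (hS : ClosedW1 d s S) :
    1 ≤ #(coordsIn S {Gam.x}) ∨ s + 1 ≤ #(coordsIn S {Gam.h, Gam.x}) ∨
      d - s + 1 ≤ #(coordsIn S {Gam.t, Gam.x}) := by
  by_contra! ⟨hx, hh, ht⟩
  have disjoint : coordsIn S {Gam.h, Gam.x} ⊆ (coordsIn S {Gam.t, Gam.x})ᶜ := by
    intro i hi
    rw [mem_compl, mem_coordsIn]
    intro hit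
    have hix : S i ⊆ {Gam.x} := by
      intro y hy
      have hyh := mem_coordsIn.1 hi hy
      have hyt := hit hy
      cases y <;> simp_all
    exact hx.not_ge (card_pos.2 ⟨i, mem_coordsIn.2 hix⟩)
  obtain ⟨M, hhM, hMt, hM⟩ := exists_subsuperset_card_eq disjoint (n := s) (by omega)
    (by rw [card_compl, Fintype.card_fin]; omega)
  obtain ⟨f, hfS, hfx, hfh, hft⟩ := exists_choice_of_not_subset (S := S) (M := M)
    (fun i hi => by simpa using hMt hi) (fun i hi => by simpa using mt (@hhM i) hi)
  rw [card_compl, Fintype.card_fin] at hft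
  rcases hS f hfS with h | h | h
  · exact hfx h
  · omega
  · omega

/-- The three block tuples `({x}, Γ, …)`, `({h, x}, …, Γ, …)` and `({t, x}, …, Γ, …)` that
generate the closed tuples under `TupLE`. -/
def extremalTuples (d s : ℕ) : Set (Fin d → Set Gam) :=
  {block d 1 {Gam.x}, block d (s + 1) {Gam.h, Gam.x}, block d (d - s + 1) {Gam.t, Gam.x}}

lemma closedW1_iff_exists_tupLE (hs₀ : 0 < s) (hsd : s < d) (S : Fin d → Set Gam) :
    ClosedW1 d s S ↔ ∃ B ∈ extremalTuples d s, TupLE S B := by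
  simp only [extremalTuples, Set.mem_insert_iff, Set.mem_singleton_iff, exists_eq_or_imp,
    exists_eq_left]
  rw [tupLE_block_iff (by omega), tupLE_block_iff (by omega), tupLE_block_iff (by omega)]
  exact ⟨ClosedW1.card_coordsIn hsd.le, closedW1_of_card_coordsIn⟩

lemma isAntichain_extremalTuples (hs₀ : 0 < s) (hsd : s < d) :
    IsAntichain TupLE (extremalTuples d s) := by
  have ne_univ {U : Set Gam} (hU : Gam.a ∉ U) : U ≠ Set.univ :=
    (Set.ne_univ_iff_exists_notMem U).2 ⟨Gam.a, hU⟩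
  rintro A (rfl | rfl | rfl) B (rfl | rfl | rfl) hAB <;>
    first
    | exact absurd rfl hAB
    | intro hle
      obtain ⟨hsub, hcard⟩ := (block_tupLE_block_iff (by omega) (by omega) (by omega)
        (ne_univ (by simp))).1 hle
      first
      | omega
      | simp [Set.insert_subset_iff] at hsub

end Closed

/-- For `d ≥ 2` and `0 < s < d`, the maximal closed `d`-tuples of nonempty
subsets of `Γ` for the constraint `W₁` are exactly, up to permutation of coordinates:
`({x}, Γ, …, Γ)`; `({h,x}` repeated `s+1` times, `Γ` repeated `d-s-1` times`)`; and
`({t,x}` repeated `d-s+1` times, `Γ` repeated `s-1` times`)`. -/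
theorem stmt_14 (d s : ℕ) (hd : 2 ≤ d) (hs0 : 0 < s) (hsd : s < d)
    (S : Fin d → Set Gam) (hS : ∀ i, (S i).Nonempty) :
    (ClosedW1 d s S ∧ ∀ S' : Fin d → Set Gam, (∀ i, (S' i).Nonempty) → ClosedW1 d s S' →
        TupLE S S' → TupLE S' S) ↔
    (PermEq S (fun i => if i = (⟨0, by omega⟩ : Fin d) then ({Gam.x} : Set Gam)
                        else Set.univ) ∨
     PermEq S (fun i => if (i : ℕ) < s + 1 then ({Gam.h, Gam.x} : Set Gam) else Set.univ) ∨
     PermEq S (fun i => if (i : ℕ) < d - s + 1 then ({Gam.t, Gam.x} : Set Gam)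
                        else Set.univ)) := by
  have drop_nonempty : (∀ S' : Fin d → Set Gam, (∀ i, (S' i).Nonempty) → ClosedW1 d s S' →
      TupLE S S' → TupLE S' S) ↔ ∀ S', ClosedW1 d s S' → TupLE S S' → TupLE S' S :=
    ⟨fun h S' hS' hle => h S' (hle.nonempty hS) hS' hle, fun h S' _ => h S'⟩
  rw [drop_nonempty, maximal_iff_exists_antisymmRel (isAntichain_extremalTuples hs0 hsd)
    (closedW1_iff_exists_tupLE hs0 hsd)]
  simp only [extremalTuples, Set.mem_insert_iff, Set.mem_singleton_iff, exists_eq_or_imp,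
    exists_eq_left, antisymmRel_tupLE_iff_permEq, block_one (by omega : 0 < d)]
  rfl
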